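/- Let K be a compact Hausdorff space and M ⊆ K a closed subset such that K ∖ M = ⋃_{n=1}^∞ H_n, where each H_n is open in its closure cl(H_n) and every point of H_n has a local base of connected sets relative to cl(H_n). Then for every δ > 0 and every δ-≺-chain F ⊆ C(K), every equivalence class of the relation ∼_M on F is countable and is scattered with respect to the linear order induced by ≺ (i.e., contains no subset order-isomorphic to the rationals). -/

import Mathlib

open Set Topology Filter

/-- `f ≺ g`: `f ≠ g` and `f` agrees with `g` on the support of `f` (the closure of
the set where `f` is nonzero). -/
def Prec {K : Type*} [TopologicalSpace K] (f g : C(K, ℝ)) : Prop :=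
  f ≠ g ∧ ∀ t ∈ closure {t | f t ≠ 0}, f t = g t

/-- `f ≺_δ g`: `f ≺ g` and `‖f - g‖ ≥ δ`. -/
def PrecDelta {K : Type*} [TopologicalSpace K] [CompactSpace K] (δ : ℝ) (f g : C(K, ℝ)) : Prop :=
  Prec f g ∧ δ ≤ ‖f - g‖

/-- `F` is a `δ`-`≺`-chain. -/
def IsPrecChain {K : Type*} [TopologicalSpace K] [CompactSpace K] (δ : ℝ)
    (F : Set C(K, ℝ)) : Prop :=
  ∀ f ∈ F, ∀ g ∈ F, f ≠ g → PrecDelta δ f g ∨ PrecDelta δ g f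

/-- A compact Hausdorff space has the Bishop property (B) if for every `δ > 0`
every `δ`-`≺`-chain in `C(K)` is countable. -/
def HasBishop (K : Type*) [TopologicalSpace K] [CompactSpace K] [T2Space K] : Prop :=
  ∀ δ : ℝ, 0 < δ → ∀ F : Set C(K, ℝ), IsPrecChain δ F → F.Countable

/-- `t ∈ M` has a local base of connected sets relative to `M`: for every set `U`
open in `M` (with its subspace topology) containing `t`, there is a connected set `V`,
open in `M`, with `t ∈ V ⊆ U`. -/
def HasConnBase {K : Type*} [TopologicalSpace K] (M : Set K) (t : K) (ht : t ∈ M) : Prop :=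
  ∀ U : Set ↥M, IsOpen U → (⟨t, ht⟩ : ↥M) ∈ U →
    ∃ V : Set ↥M, IsOpen V ∧ IsConnected V ∧ (⟨t, ht⟩ : ↥M) ∈ V ∧ V ⊆ U

/-- `f ∼_M g`: the supremum of `|f - g|` over `M` is `< δ`. -/
def SimM {K : Type*} [TopologicalSpace K] (δ : ℝ) (M : Set K) (f g : C(K, ℝ)) : Prop :=
  (⨆ t : ↥M, |f ↑t - g ↑t|) < δ

section CutSystem

variable {X I : Type*} [TopologicalSpace X]

/-- The descending construction behind both halves of the theorem: if every obstruction on the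
boundary of `H n` can be removed by passing to a stronger condition `p`, then the sets `D p`
cannot all be nonempty and covered by the `H n`. -/
theorem exists_empty_of_descending {P : Type*} [Preorder P] [Nonempty P] {H : ℕ → Set X}
    {D : P → Set X} (hB : ∀ n, IsClosed (closure (H n) \ H n)) (hD : ∀ p, D p ⊆ ⋃ n, H n)
    (hlim : ∀ (p : ℕ → P) (Z : ℕ → Set X), Monotone p → Antitone Z → (∀ n, IsClosed (Z n)) →
      (∀ n, ∀ q, p n ≤ q → (Z n ∩ D q).Nonempty) → (⋂ n, Z n ∩ D (p n)).Nonempty)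
    (hstep : ∀ n (Z : Set X) (p : P), IsClosed Z → Z ∩ (closure (H n) \ H n) ∩ D p = ∅ →
      ∃ q, p ≤ q ∧ Z ∩ closure (H n) ∩ D q = ∅) :
    ∃ p, D p = ∅ := by
  by_contra! hne
  let Good : Set X → P → Prop := fun Z p => IsClosed Z ∧ ∀ q, p ≤ q → (Z ∩ D q).Nonempty
  have step : ∀ (n : ℕ) (s : {s : Set X × P // Good s.1 s.2}),
      ∃ s' : {s : Set X × P // Good s.1 s.2}, s'.1.1 ⊆ s.1.1 ∧ s.1.2 ≤ s'.1.2 ∧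
        s'.1.1 ∩ D s'.1.2 ∩ H n = ∅ := by
    rintro n ⟨⟨Z, p⟩, hZ, hg⟩
    by_cases h : ∀ q, p ≤ q → (Z ∩ (closure (H n) \ H n) ∩ D q).Nonempty
    · refine ⟨⟨⟨Z ∩ (closure (H n) \ H n), p⟩, hZ.inter (hB n), h⟩, inter_subset_left, le_rfl, ?_⟩
      ext x
      simp only [mem_inter_iff, Set.mem_sdiff, mem_empty_iff_false]
      tauto
    · push Not at h
      obtain ⟨q, hpq, hq⟩ := h
      obtain ⟨r, hqr, hr⟩ := hstep n Z q hZ hq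
      refine ⟨⟨⟨Z, r⟩, hZ, fun s hs => hg s (hpq.trans (hqr.trans hs))⟩, subset_rfl,
        hpq.trans hqr, ?_⟩
      rw [eq_empty_iff_forall_notMem] at hr ⊢
      rintro x ⟨⟨hxZ, hxD⟩, hxH⟩
      exact hr x ⟨⟨hxZ, subset_closure hxH⟩, hxD⟩
  choose next hsub hle hdisj using step
  let p₀ : P := Classical.arbitrary P
  let s : ℕ → {s : Set X × P // Good s.1 s.2} := fun n =>
    Nat.rec ⟨⟨univ, p₀⟩, isClosed_univ, fun q _ => by simpa using hne q⟩
      (fun n s => next n s) n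
  obtain ⟨x, hx⟩ := hlim (fun n => (s n).1.2) (fun n => (s n).1.1)
    (monotone_nat_of_le_succ fun n => hle n (s n))
    (antitone_nat_of_succ_le fun n => hsub n (s n))
    (fun n => (s n).2.1) (fun n => (s n).2.2)
  rw [mem_iInter] at hx
  obtain ⟨n, hn⟩ := mem_iUnion.1 (hD _ (hx 0).2)
  exact eq_empty_iff_forall_notMem.1 (hdisj n (s n)) x ⟨hx (n + 1), hn⟩

/-- A family of closed sets `A a b`, indexed by the intervals of a linear order and covered by
the sets `H n`, such that locally in `closure (H n)` each of them lives on a single cut. -/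
structure CutSystem [LinearOrder I] (H : ℕ → Set X) (A : I → I → Set X) : Prop where
  isClosed : ∀ a b, IsClosed (A a b)
  nonempty : ∀ a b, a < b → (A a b).Nonempty
  subset_iUnion : ∀ a b, a < b → A a b ⊆ ⋃ n, H n
  mono : ∀ a a' b' b, a ≤ a' → a' < b' → b' ≤ b → A a' b' ⊆ A a b
  split : ∀ n a b t, a < b → t ∈ H n → t ∈ A a b →
    ∃ V ∈ 𝓝[closure (H n)] t, ∀ c, a < c → c < b → V ∩ A a c = ∅ ∨ V ∩ A c b = ∅

variable [LinearOrder I] {H : ℕ → Set X} {A : I → I → Set X}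

theorem CutSystem.dual (h : CutSystem H A) :
    CutSystem H (fun a b : Iᵒᵈ => A (OrderDual.ofDual b) (OrderDual.ofDual a)) where
  isClosed a b := h.isClosed _ _
  nonempty a b hab := h.nonempty _ _ hab
  subset_iUnion a b hab := h.subset_iUnion _ _ hab
  mono a a' b' b h₁ h₂ h₃ := h.mono _ _ _ _ h₃ h₂ h₁
  split n a b t hab htH htA := by
    obtain ⟨V, hV, hc⟩ := h.split n _ _ t hab htH htA
    exact ⟨V, hV, fun c hac hcb => (hc (OrderDual.ofDual c) hcb hac).symm⟩

theorem CutSystem.comap {J : Type*} [LinearOrder J] (h : CutSystem H A) {φ : J → I}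
    (hφ : StrictMono φ) : CutSystem H (fun a b => A (φ a) (φ b)) where
  isClosed a b := h.isClosed _ _
  nonempty a b hab := h.nonempty _ _ (hφ hab)
  subset_iUnion a b hab := h.subset_iUnion _ _ (hφ hab)
  mono a a' b' b h₁ h₂ h₃ := h.mono _ _ _ _ (hφ.monotone h₁) (hφ h₂) (hφ.monotone h₃)
  split n a b t hab htH htA := by
    obtain ⟨V, hV, hc⟩ := h.split n _ _ t (hφ hab) htH htA
    exact ⟨V, hV, fun c hac hcb => hc _ (hφ hac) (hφ hcb)⟩

theorem CutSystem.exists_inter_eq_empty [CompactSpace X] (h : CutSystem H A) {n : ℕ} {Z : Set X}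
    (hZ : IsClosed Z) {a b : I} (hZB : Z ∩ (closure (H n) \ H n) ∩ A a b = ∅) {c : ℕ → I}
    (hc : StrictMono c) (hac : ∀ i, a ≤ c i) (hcb : ∀ i, c i ≤ b) :
    ∃ i, Z ∩ closure (H n) ∩ A (c i) (c (i + 1)) = ∅ := by
  by_contra! hne
  choose x hx using hne
  have hlt : ∀ i, c i < c (i + 1) := fun i => hc i.lt_succ_self
  have hxY : ∀ i, x i ∈ Z ∩ closure (H n) ∩ A a b := fun i =>
    ⟨(hx i).1, h.mono _ _ _ _ (hac i) (hlt i) (hcb _) (hx i).2⟩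
  obtain ⟨y, hyY, hy⟩ := ((hZ.inter isClosed_closure).inter (h.isClosed a b)).isCompact
    (f := map x atTop) (le_principal_iff.2 (mem_map.2 (Filter.univ_mem' hxY)))
  have hyH : y ∈ H n := by
    by_contra hyH
    exact eq_empty_iff_forall_notMem.1 hZB y ⟨⟨hyY.1.1, hyY.1.2, hyH⟩, hyY.2⟩
  have hab : a < b := (hac 0).trans_lt ((hlt 0).trans_le (hcb 1))
  obtain ⟨V, hV, hcut⟩ := h.split n a b y hab hyH hyY.2
  have hfreq : ∃ᶠ i in atTop, x i ∈ V := by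
    have h₁ : ∃ᶠ z in map x atTop, z ∈ closure (H n) → z ∈ V :=
      hy.frequently (mem_nhdsWithin_iff_eventually.1 hV)
    exact (frequently_map.1 h₁).mono fun i hi => hi (hx i).1.2
  obtain ⟨i, -, hi⟩ := frequently_atTop.1 hfreq 0
  obtain ⟨j, hij, hj⟩ := frequently_atTop.1 hfreq (i + 1)
  have hcij : c (i + 1) ≤ c j := hc.monotone hij
  rcases hcut (c j) ((hac i).trans_lt ((hlt i).trans_le hcij)) ((hlt j).trans_le (hcb _))
    with h₁ | h₁
  · exact eq_empty_iff_forall_notMem.1 h₁ (x i)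
      ⟨hi, h.mono _ _ _ _ (hac i) (hlt i) hcij (hx i).2⟩
  · exact eq_empty_iff_forall_notMem.1 h₁ (x j)
      ⟨hj, h.mono _ _ _ _ le_rfl (hlt j) (hcb _) (hx j).2⟩

theorem CutSystem.false_of_denselyOrdered [CompactSpace X] [DenselyOrdered I] [Nontrivial I]
    (h : CutSystem H A) (hB : ∀ n, IsClosed (closure (H n) \ H n)) : False := by
  let P := {p : I × Iᵒᵈ // p.1 < OrderDual.ofDual p.2}
  let D : P → Set X := fun p => A p.1.1 (OrderDual.ofDual p.1.2)
  have : Nonempty P := by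
    obtain ⟨a, b, hab⟩ := exists_pair_lt I
    exact ⟨⟨(a, OrderDual.toDual b), hab⟩⟩
  have hanti : Antitone D := fun p q hpq => h.mono _ _ _ _ hpq.1 q.2 hpq.2
  obtain ⟨p, hp⟩ := exists_empty_of_descending (D := D) hB
    (fun p => h.subset_iUnion _ _ p.2)
    (fun p Z hp hZ hZc hg => by
      refine IsCompact.nonempty_iInter_of_directed_nonempty_isCompact_isClosed _ ?_
        (fun n => hg n _ le_rfl) (fun n => ((hZc n).inter (h.isClosed _ _)).isCompact)
        (fun n => (hZc n).inter (h.isClosed _ _))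
      exact directed_of_isDirected_le fun i j hij =>
        inter_subset_inter (hZ hij) (hanti (hp hij)))
    (fun n Z p hZ hZB => by
      obtain ⟨⟨a, b⟩, hab⟩ := p
      have : Nonempty (Ioo a (OrderDual.ofDual b)) := (nonempty_Ioo.2 hab).to_subtype
      obtain ⟨c, hc⟩ := Nat.exists_strictMono (Ioo a (OrderDual.ofDual b))
      obtain ⟨i, hi⟩ := h.exists_inter_eq_empty hZ hZB (c := fun i => (c i : I))
        (fun i j hij => hc hij) (fun i => (c i).2.1.le) (fun i => (c i).2.2.le)
      exact ⟨⟨(c i, OrderDual.toDual (c (i + 1) : I)), hc i.lt_succ_self⟩,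
        ⟨(c i).2.1.le, (c (i + 1)).2.2.le⟩, hi⟩)
  exact (h.nonempty _ _ p.2).ne_empty hp

theorem CutSystem.false_of_countable_bdd [CompactSpace X]
    (h : CutSystem H A) (hB : ∀ n, IsClosed (closure (H n) \ H n))
    (hI : ∀ s : Set I, s.Countable → ∃ b, ∀ a ∈ s, a < b) : False := by
  let D : I → Set X := fun a => ⋃ b ∈ Ioi a, A a b
  obtain ⟨a₀, -⟩ := hI ∅ countable_empty
  have : Nonempty I := ⟨a₀⟩
  obtain ⟨p, hp⟩ := exists_empty_of_descending (D := D) hB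
    (fun p => iUnion₂_subset fun b hb => h.subset_iUnion _ _ hb)
    (fun p Z hp hZ hZc hg => by
      obtain ⟨a, ha⟩ := hI (range p) (countable_range p)
      have hpa : ∀ n, p n < a := fun n => ha _ (mem_range_self n)
      have hex : ∀ n, ∃ b, a < b ∧ (Z n ∩ A a b).Nonempty := fun n => by
        obtain ⟨x, hxZ, hxD⟩ := hg n a (hpa n).le
        obtain ⟨b, hb, hxb⟩ := mem_iUnion₂.1 hxD
        exact ⟨b, hb, x, hxZ, hxb⟩
      choose b hab hne using hex
      obtain ⟨β, hβ⟩ := hI (range b) (countable_range b)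
      have hbβ : ∀ n, b n < β := fun n => hβ _ (mem_range_self n)
      have haβ : a < β := (hab 0).trans (hbβ 0)
      obtain ⟨x, hx⟩ := IsCompact.nonempty_iInter_of_directed_nonempty_isCompact_isClosed
        (fun n => Z n ∩ A a β)
        (directed_of_isDirected_le fun i j hij => inter_subset_inter_left _ (hZ hij))
        (fun n => (hne n).mono (inter_subset_inter_right _
          (h.mono _ _ _ _ le_rfl (hab n) (hbβ n).le)))
        (fun n => ((hZc n).inter (h.isClosed _ _)).isCompact)
        (fun n => (hZc n).inter (h.isClosed _ _))
      rw [mem_iInter] at hx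
      refine ⟨x, mem_iInter.2 fun n => ⟨(hx n).1, mem_iUnion₂.2 ⟨β, (hpa n).trans haβ, ?_⟩⟩⟩
      exact h.mono _ _ _ _ (hpa n).le haβ le_rfl (hx n).2)
    (fun n Z p hZ hZB => by
      by_contra! hne
      have hex : ∀ q : Ici p, ∃ r : Ici p, q < r ∧
          (Z ∩ closure (H n) ∩ A (q : I) (r : I)).Nonempty := fun q => by
        obtain ⟨x, hxZ, hxD⟩ := hne q q.2
        obtain ⟨b, hb, hxb⟩ := mem_iUnion₂.1 hxD
        exact ⟨⟨b, q.2.trans (le_of_lt hb)⟩, hb, x, hxZ, hxb⟩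
      choose next hlt hnext using hex
      let c : ℕ → Ici p := fun i => next^[i] ⟨p, le_rfl⟩
      have hsucc : ∀ i, c (i + 1) = next (c i) := fun i => Function.iterate_succ_apply' _ _ _
      have hc : StrictMono c := strictMono_nat_of_lt_succ fun i => hsucc i ▸ hlt (c i)
      obtain ⟨b, hb⟩ := hI (range fun i => (c i : I)) (countable_range _)
      have hcb : ∀ i, (c i : I) < b := fun i => hb _ (mem_range_self i)
      have hpb : p < b := (c 0).2.trans_lt (hcb 0)
      have hZB' : Z ∩ (closure (H n) \ H n) ∩ A p b = ∅ :=
        subset_empty_iff.1 (hZB ▸ inter_subset_inter_right _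
          (subset_iUnion₂ (s := fun b (_ : b ∈ Ioi p) => A p b) b hpb))
      obtain ⟨i, hi⟩ := h.exists_inter_eq_empty hZ hZB' (c := fun i => (c i : I))
        (fun i j hij => hc hij) (fun i => (c i).2) (fun i => (hcb i).le)
      exact (hnext (c i)).ne_empty (hsucc i ▸ hi))
  obtain ⟨b, hb⟩ := hI {p} (countable_singleton p)
  have hpb : p < b := hb p rfl
  exact ((h.nonempty _ _ hpb).mono
    (subset_iUnion₂ (s := fun b (_ : b ∈ Ioi p) => A p b) b hpb)).ne_empty hp

end CutSystem

section Countable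

/-- A linear order without dense suborders and without suborders of uncountable cofinality or
coinitiality is countable. -/
theorem countable_of_forall_subset {I : Type*} [LinearOrder I]
    (hdense : ∀ R : Set I, R.Nontrivial → ¬ DenselyOrdered R)
    (hup : ∀ E : Set I, ¬ ∀ s : Set E, s.Countable → ∃ b, ∀ x ∈ s, x < b)
    (hdown : ∀ E : Set I, ¬ ∀ s : Set E, s.Countable → ∃ b, ∀ x ∈ s, b < x) :
    Countable I := by
  let S : Setoid I :=
    { r := fun a b => (uIcc a b).Countable
      iseqv :=
        { refl := fun a => by simp
          symm := fun {a b} h => by rwa [uIcc_comm]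
          trans := fun {a b c} h₁ h₂ => (h₁.union h₂).mono uIcc_subset_uIcc_union_uIcc } }
  have hclass : ∀ a : I, {x | (uIcc a x).Countable}.Countable := fun a => by
    have h₁ : ({x | (uIcc a x).Countable} ∩ Ici a).Countable := by
      have := hup {x | (uIcc a x).Countable}
      push Not at this
      obtain ⟨s, hs, hsb⟩ := this
      refine (hs.biUnion fun x _ => x.2).mono ?_
      rintro y ⟨hyE, hay⟩
      obtain ⟨x, hxs, hxy⟩ := hsb ⟨y, hyE⟩
      exact mem_iUnion₂.2 ⟨x, hxs, Icc_subset_uIcc ⟨hay, hxy⟩⟩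
    have h₂ : ({x | (uIcc a x).Countable} ∩ Iic a).Countable := by
      have := hdown {x | (uIcc a x).Countable}
      push Not at this
      obtain ⟨s, hs, hsb⟩ := this
      refine (hs.biUnion fun x _ => x.2).mono ?_
      rintro y ⟨hyE, hay⟩
      obtain ⟨x, hxs, hxy⟩ := hsb ⟨y, hyE⟩
      exact mem_iUnion₂.2 ⟨x, hxs, Icc_subset_uIcc' ⟨hxy, hay⟩⟩
    refine (h₁.union h₂).mono fun x hx => ?_
    rcases le_total a x with h | h
    · exact Or.inl ⟨hx, h⟩
    · exact Or.inr ⟨hx, h⟩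
  by_contra hI
  let rep : I → I := fun x => (Quotient.mk S x).out
  have hrep : ∀ x, (uIcc (rep x) x).Countable := fun x => Quotient.mk_out (s := S) x
  have hrep_eq : ∀ x y, (uIcc (rep x) (rep y)).Countable → rep x = rep y := fun x y h => by
    have : Quotient.mk S x = Quotient.mk S y := by
      have h' := Quotient.sound (s := S) (a := rep x) (b := rep y) h
      rwa [Quotient.out_eq, Quotient.out_eq] at h'
    exact congrArg Quotient.out this
  have hex : ∀ s : Set I, ¬ s.Countable → ∀ t : Set I, t.Countable → ∃ x ∈ s, x ∉ t :=
    fun s hs t ht => not_subset.1 fun h => hs (ht.mono h)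
  refine hdense (range rep) ?_ ⟨?_⟩
  · have : ¬ (univ : Set I).Countable := fun h => hI (countable_univ_iff.1 h)
    obtain ⟨x, -, -⟩ := hex _ this ∅ countable_empty
    obtain ⟨y, -, hy⟩ := hex _ this _ (hclass (rep x))
    refine ⟨rep x, mem_range_self x, rep y, mem_range_self y, fun h => hy ?_⟩
    rw [h]
    exact hrep y
  · rintro ⟨_, x, rfl⟩ ⟨_, y, rfl⟩ hxy
    replace hxy : rep x < rep y := hxy
    have hunc : ¬ (uIcc (rep x) (rep y)).Countable := fun h => hxy.ne (hrep_eq x y h)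
    obtain ⟨z, hz, hzn⟩ := hex _ hunc _ ((hclass (rep x)).union (hclass (rep y)))
    rw [uIcc_of_le hxy.le] at hz
    refine ⟨⟨rep z, mem_range_self z⟩, ?_, ?_⟩
    · refine lt_of_not_ge fun hle => hzn (Or.inl ((hrep z).mono ?_))
      exact uIcc_subset_uIcc_right (Icc_subset_uIcc ⟨hle, hz.1⟩)
    · refine lt_of_not_ge fun hle => hzn (Or.inr ((hrep z).mono ?_))
      exact uIcc_subset_uIcc_right (Icc_subset_uIcc' ⟨hz.2, hle⟩)

theorem CutSystem.countable {X I : Type*} [TopologicalSpace X] [CompactSpace X] [LinearOrder I]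
    {H : ℕ → Set X} {A : I → I → Set X} (h : CutSystem H A)
    (hB : ∀ n, IsClosed (closure (H n) \ H n)) : Countable I := by
  refine countable_of_forall_subset (fun R hR hd => ?_) (fun E hE => ?_) (fun E hE => ?_)
  · have := hR.coe_sort
    exact (h.comap (Subtype.strictMono_coe (· ∈ R))).false_of_denselyOrdered hB
  · exact (h.comap (Subtype.strictMono_coe (· ∈ E))).false_of_countable_bdd hB hE
  · exact (h.comap (Subtype.strictMono_coe (· ∈ E))).dual.false_of_countable_bdd hB hE

end Countable

section Prec

variable {K : Type*} [TopologicalSpace K]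

theorem Prec.eq_of_ne_zero {f g : C(K, ℝ)} (h : Prec f g) {t : K} (ht : f t ≠ 0) : f t = g t :=
  h.2 t (subset_closure ht)

theorem Prec.trans {f g h : C(K, ℝ)} (hfg : Prec f g) (hgh : Prec g h) : Prec f h := by
  have hsub : {t | f t ≠ 0} ⊆ {t | g t ≠ 0} := fun t ht => by
    rw [mem_ofPred_eq, ← hfg.eq_of_ne_zero ht]
    exact ht
  refine ⟨?_, fun t ht => (hfg.2 t ht).trans (hgh.2 t (closure_mono hsub ht))⟩
  rintro rfl
  refine hfg.1 (ContinuousMap.ext fun t => ?_)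
  by_cases ht : g t = 0
  · by_contra hne
    exact hne (hfg.eq_of_ne_zero fun h0 => hne (h0.trans ht.symm))
  · exact (hgh.eq_of_ne_zero ht).symm

theorem SimM.abs_sub_lt [CompactSpace K] {δ : ℝ} {M : Set K} {f g : C(K, ℝ)} (h : SimM δ M f g)
    {t : K} (ht : t ∈ M) : |f t - g t| < δ := by
  refine lt_of_le_of_lt (le_ciSup (f := fun t : M => |f t - g t|) ?_ ⟨t, ht⟩) h
  refine ⟨‖f - g‖, ?_⟩
  rintro _ ⟨x, rfl⟩
  exact (f - g).norm_coe_le_norm x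

theorem cutSystem_of_prec [CompactSpace K] {I : Type*} [LinearOrder I] {M : Set K} {H : ℕ → Set K}
    (hcover : Mᶜ = ⋃ n, H n)
    (hconn : ∀ n, ∀ t, ∀ ht : t ∈ H n, HasConnBase (closure (H n)) t (subset_closure ht))
    {δ : ℝ} (hδ : 0 < δ) {F : Set C(K, ℝ)} (hF : IsPrecChain δ F) {f₀ : C(K, ℝ)} (hf₀ : f₀ ∈ F)
    {e : I → C(K, ℝ)} (heF : ∀ i, e i ∈ F) (heM : ∀ i, SimM δ M f₀ (e i))
    (he : ∀ i j, i < j → Prec (e i) (e j)) :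
    CutSystem H (fun i j => {t | δ ≤ |e j t| ∧ e i t = 0}) where
  isClosed a b := (isClosed_le continuous_const (e b).continuous.abs).inter
    (isClosed_eq (e a).continuous continuous_const)
  nonempty a b hab := by
    have hn : δ ≤ ‖e a - e b‖ := by
      rcases hF _ (heF a) _ (heF b) (he a b hab).1 with h | h
      · exact h.2
      · rw [norm_sub_rev]
        exact h.2
    obtain ⟨t, ht⟩ : ∃ t, δ ≤ |e a t - e b t| := by
      by_contra! hlt
      exact hn.not_gt ((ContinuousMap.norm_lt_iff _ hδ).2 hlt)
    have h0 : e a t = 0 := by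
      by_contra h0
      rw [(he a b hab).eq_of_ne_zero h0, sub_self, abs_zero] at ht
      exact ht.not_gt hδ
    refine ⟨t, ?_, h0⟩
    rwa [h0, zero_sub, abs_neg] at ht
  subset_iUnion a b hab := by
    rw [← hcover]
    rintro t ⟨htb, hta⟩ htM
    have hb0 : e b t ≠ 0 := fun h => by
      rw [h, abs_zero] at htb
      exact htb.not_gt hδ
    have h₁ := (heM a).abs_sub_lt htM
    have h₂ := (heM b).abs_sub_lt htM
    have hf : f₀ t = 0 ∨ f₀ t = e b t := by
      by_cases heq : f₀ = e b
      · exact Or.inr (by rw [heq])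
      rcases hF _ hf₀ _ (heF b) heq with h | h
      · exact or_iff_not_imp_left.2 fun h0 => h.1.eq_of_ne_zero h0
      · exact Or.inr (h.1.eq_of_ne_zero hb0).symm
    rcases hf with h | h
    · rw [h, zero_sub, abs_neg] at h₂
      exact htb.not_gt h₂
    · rw [h, hta, sub_zero] at h₁
      exact htb.not_gt h₁
  mono a a' b' b h₁ _ h₃ := by
    rintro t ⟨htb, hta⟩
    refine ⟨?_, ?_⟩
    · rcases h₃.eq_or_lt with rfl | h
      · exact htb
      · rwa [← (he _ _ h).eq_of_ne_zero fun h0 => htb.not_gt (by rwa [h0, abs_zero])]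
    · rcases h₁.eq_or_lt with rfl | h
      · exact hta
      · by_contra h0
        exact h0 (((he _ _ h).eq_of_ne_zero h0).trans hta)
  split n a b t hab htH htA := by
    have hUo : IsOpen {x | e b x ≠ 0} := isOpen_ne_fun (e b).continuous continuous_const
    obtain ⟨V, hVo, hVc, htV, hVU⟩ := hconn n t htH (Subtype.val ⁻¹' {x | e b x ≠ 0})
      (hUo.preimage continuous_subtype_val)
      (fun h0 => htA.1.not_gt (by rwa [show e b t = 0 from h0, abs_zero]))
    refine ⟨Subtype.val '' V, ?_, fun c hac hcb => ?_⟩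
    · rw [nhdsWithin_eq_map_subtype_coe (subset_closure htH)]
      exact image_mem_map (hVo.mem_nhds htV)
    · by_contra! hne
      obtain ⟨⟨x, hxV, hxc, -⟩, ⟨y, hyV, -, hyc⟩⟩ := hne
      have hV0 : ∀ z ∈ Subtype.val '' V, e b z ≠ 0 := by
        rintro _ ⟨z, hz, rfl⟩
        exact hVU hz
      have hne : ∀ z ∈ Subtype.val '' V, z ∈ closure {t | e c t ≠ 0} → e c z ≠ 0 :=
        fun z hz hzc => ((he c b hcb).2 z hzc).symm ▸ hV0 z hz
      obtain ⟨z, -, hz₁, hz₂⟩ :=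
        (hVc.image _ continuous_subtype_val.continuousOn).isPreconnected {x | e c x ≠ 0}
          (closure {x | e c x ≠ 0})ᶜ (isOpen_ne_fun (e c).continuous continuous_const)
          isClosed_closure.isOpen_compl
          (fun z hz => or_iff_not_imp_right.2 fun h => hne z hz (not_not.1 h))
          ⟨x, hxV, fun h0 => hxc.not_gt (by rwa [h0, abs_zero])⟩
          ⟨y, hyV, fun h => hne y hyV h hyc⟩
      exact hz₂ (subset_closure hz₁)

end Prec

/-- **Theorem 3.6 (1).** Let `M ⊆ K` be closed with `K ∖ M = ⋃ₙ Hₙ`, each `Hₙ` open in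
its closure and each point of `Hₙ` having a local base of connected sets relative to
`cl(Hₙ)`. Then for every `δ > 0` and every `δ`-`≺`-chain `F ⊆ C(K)`, every equivalence
class of `∼_M` on `F` is countable and scattered in the order induced by `≺`
(contains no copy of `ℚ`). -/
theorem stmt7 {K : Type*} [TopologicalSpace K] [CompactSpace K] [T2Space K]
    (M : Set K) (hM : IsClosed M) (H : ℕ → Set K) (hcover : Mᶜ = ⋃ n, H n)
    (hopen : ∀ n, ∃ U : Set K, IsOpen U ∧ H n = U ∩ closure (H n))
    (hconn : ∀ n, ∀ t, ∀ ht : t ∈ H n, HasConnBase (closure (H n)) t (subset_closure ht))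
    (δ : ℝ) (hδ : 0 < δ) (F : Set C(K, ℝ)) (hF : IsPrecChain δ F)
    (f₀ : C(K, ℝ)) (hf₀ : f₀ ∈ F) :
    ({g ∈ F | SimM δ M f₀ g}).Countable ∧
      ¬ ∃ e : ℚ → C(K, ℝ), (∀ q, e q ∈ {g ∈ F | SimM δ M f₀ g}) ∧
        ∀ q r : ℚ, q < r → Prec (e q) (e r) := by
  have hB : ∀ n, IsClosed (closure (H n) \ H n) := fun n => by
    obtain ⟨U, hU, hHU⟩ := hopen n
    have : closure (H n) \ H n = closure (H n) ∩ Uᶜ := by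
      conv_lhs => rw [sdiff_eq, hHU, compl_inter, inter_union_distrib_left, ← hHU, inter_compl_self,
        union_empty]
    rw [this]
    exact isClosed_closure.inter hU.isClosed_compl
  refine ⟨?_, ?_⟩
  · let C := {g ∈ F | SimM δ M f₀ g}
    let _ : LinearOrder C :=
      { le := fun f g => f = g ∨ Prec f.1 g.1
        lt := fun f g => Prec f.1 g.1
        le_refl := fun f => Or.inl rfl
        le_trans := by
          rintro f g h (rfl | h₁) (rfl | h₂)
          exacts [Or.inl rfl, Or.inr h₂, Or.inr h₁, Or.inr (h₁.trans h₂)]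
        le_antisymm := by
          rintro f g (h | h₁) (h' | h₂)
          exacts [h, h, h'.symm, ((h₁.trans h₂).1 rfl).elim]
        lt_iff_le_not_ge := fun f g => by
          refine ⟨fun h => ⟨Or.inr h, ?_⟩, ?_⟩
          · rintro (rfl | h')
            exacts [h.1 rfl, (h.trans h').1 rfl]
          · rintro ⟨rfl | h, hn⟩
            exacts [(hn (Or.inl rfl)).elim, h]
        le_total := fun f g => by
          by_cases hfg : f = g
          · exact Or.inl (Or.inl hfg)
          · exact (hF _ f.2.1 _ g.2.1 fun h => hfg (Subtype.ext h)).imp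
              (fun h => Or.inr h.1) (fun h => Or.inr h.1)
        toDecidableLE := Classical.decRel _ }
    exact (cutSystem_of_prec hcover hconn hδ hF hf₀ (e := fun f : C => f.1) (fun f => f.2.1)
      (fun f => f.2.2) (fun f g h => h)).countable hB
  · rintro ⟨e, heC, he⟩
    exact (cutSystem_of_prec hcover hconn hδ hF hf₀ (fun q => (heC q).1) (fun q => (heC q).2)
      he).false_of_denselyOrdered hB
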